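/- In the tensor-triangulated adjunction setting described in the context, suppose ⟨G⟩̄_l = 𝒯 for an object G of 𝒯 and some l ≥ 0, and suppose the unit 1_𝒮 belongs to ⟨f_*G⟩̄_n for some n ≥ 0. Then ⟨f_*G⟩̄_{ln} = 𝒮; in particular f_*G is a strong ⊕-generator for 𝒮. -/

import Mathlib

/-!
Tensoring with `X : 𝒮` turns `1 ∈ ⟨f_* G⟩̄ₙ` into `X ∈ ⟨f_* G ⊗ X⟩̄ₙ`. By the projection
formula `f_* G ⊗ X ≅ f_*(G ⊗ f^* X)`, which lies in `⟨f_* G⟩̄ₗ` because `G ⊗ f^* X ∈ 𝒯 = ⟨G⟩̄ₗ`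
and exact coproduct-preserving functors respect levels (`bigLevel_map`). It remains to see that
`X ∈ ⟨H⟩̄ₙ` and `H ∈ ⟨K⟩̄ₗ` give `X ∈ ⟨K⟩̄_{ln}` (`bigLevel_trans`).

Usually this last step rests on the associativity of extensions, that is on the octahedral axiom,
which is not part of `Pretriangulated`. The proof below avoids it by means of ghosts.
A map is a ghost if it is killed by every map from a shift of `G`, and
`X` is called `n`-ghost-free (`NoGhost G n X`) if every composite of `n` ghosts out of `X` vanishes.
The latter property is visibly stable under shifts, coproducts and summands, and an extension of a
`b`-ghost-free object by an `a`-ghost-free one is `(a + b)`-ghost-free. So the key fact is that `X`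
lies in `⟨G⟩̄ₙ` if and only if it is `n`-ghost-free (`mem_bigLevel_iff_noGhost`).

The converse direction uses the cellular tower of `X`: a triangle `P ⟶ X ⟶ X₁ ⟶ P⟦1⟧` with
`P ∈ ⟨G⟩̄₁` and `X ⟶ X₁` a ghost, followed by the same construction for `X₁`, and so on. Splicing
gives `W ⟶ X` through which every map killed by the composite `n`-fold ghost `X ⟶ Xₙ`
factors (`exists_approx`). The object `W` is built by extensions in the order opposite to that of
`bigLevel`; `bigLevel_ext_one_left` shows that the order does not matter, and its octahedron-free
proof again goes through ghosts.
-/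

open CategoryTheory Limits Pretriangulated MonoidalCategory

universe v u v₂ u₂

namespace Stmt

variable {C : Type u} [Category.{v} C]

/-- `X` is a retract (direct summand) of `Y`. -/
def IsRetract (X Y : C) : Prop := ∃ (i : X ⟶ Y) (p : Y ⟶ X), i ≫ p = 𝟙 X

section Big

variable [HasZeroObject C] [Preadditive C] [HasShift C ℤ]
  [∀ n : ℤ, (shiftFunctor C n).Additive] [Pretriangulated C]

/-- The objects of `⟨G⟩̄₁`: the smallest collection of objects containing `G` that is
closed under shifts, arbitrary small coproducts, and direct summands (retracts). -/
def bigOne (G : C) : Set C :=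
  ⋂₀ {S : Set C | G ∈ S ∧ (∀ X ∈ S, ∀ n : ℤ, (X⟦n⟧ : C) ∈ S) ∧
      (∀ (ι : Type v) (f : ι → C) (_ : HasCoproduct f), (∀ i, f i ∈ S) → (∐ f) ∈ S) ∧
      (∀ X Y : C, Y ∈ S → IsRetract X Y → X ∈ S)}

/-- The objects of `⟨G⟩̄ₙ`: `⟨G⟩̄₀` consists of the objects isomorphic to `0`;
`⟨G⟩̄₁` is `bigOne G`; for `n ≥ 2`, `⟨G⟩̄ₙ` consists of the direct summands of objects `E`
fitting in a distinguished triangle `A ⟶ E ⟶ B ⟶ A⟦1⟧` with `A ∈ ⟨G⟩̄ₙ₋₁` and `B ∈ ⟨G⟩̄₁`. -/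
def bigLevel (G : C) : ℕ → Set C
  | 0 => {X | IsZero X}
  | 1 => bigOne G
  | (n + 2) => {X | ∃ (E A B : C) (f : A ⟶ E) (g : E ⟶ B) (h : B ⟶ A⟦(1 : ℤ)⟧),
      (Triangle.mk f g h ∈ distTriang C) ∧ A ∈ bigLevel G (n + 1) ∧ B ∈ bigOne G ∧
      IsRetract X E}

end Big

section Retract

lemma IsRetract.refl (X : C) : IsRetract X X := ⟨𝟙 X, 𝟙 X, by simp⟩

lemma IsRetract.trans {X Y Z : C} (h : IsRetract X Y) (h' : IsRetract Y Z) : IsRetract X Z := by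
  obtain ⟨i, p, hip⟩ := h
  obtain ⟨j, q, hjq⟩ := h'
  exact ⟨i ≫ j, q ≫ p, by rw [Category.assoc, reassoc_of% hjq, hip]⟩

lemma IsRetract.of_iso {X Y : C} (e : X ≅ Y) : IsRetract X Y := ⟨e.hom, e.inv, by simp⟩

lemma IsRetract.map {D : Type*} [Category* D] (Φ : C ⥤ D) {X Y : C} (h : IsRetract X Y) :
    IsRetract (Φ.obj X) (Φ.obj Y) := by
  obtain ⟨i, p, hip⟩ := h
  exact ⟨Φ.map i, Φ.map p, by rw [← Φ.map_comp, hip, Φ.map_id]⟩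

end Retract

section Levels

set_option linter.unusedSectionVars false

variable [HasZeroObject C] [Preadditive C] [HasShift C ℤ]
  [∀ n : ℤ, (shiftFunctor C n).Additive] [Pretriangulated C]

/-! ### The classes `⟨G⟩̄ₙ` -/

lemma bigOne_self (G : C) : G ∈ bigOne G := fun _ hS => hS.1

lemma bigOne_shift {G X : C} (h : X ∈ bigOne G) (n : ℤ) : (X⟦n⟧ : C) ∈ bigOne G :=
  fun S hS => hS.2.1 X (h S hS) n

lemma bigOne_coprod {G : C} {ι : Type v} (f : ι → C) [hf : HasCoproduct f]
    (h : ∀ i, f i ∈ bigOne G) : (∐ f) ∈ bigOne G :=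
  fun S hS => hS.2.2.1 ι f hf (fun i => h i S hS)

lemma bigOne_retract {G X Y : C} (h : Y ∈ bigOne G) (hr : IsRetract X Y) : X ∈ bigOne G :=
  fun S hS => hS.2.2.2 X Y (h S hS) hr

lemma isZero_of_isRetract {X Y : C} (h : IsZero Y) (hr : IsRetract X Y) : IsZero X := by
  obtain ⟨i, p, hip⟩ := hr
  rw [IsZero.iff_id_eq_zero, ← hip, h.eq_of_tgt i 0, zero_comp]

lemma bigLevel_retract {G X Y : C} : ∀ {n : ℕ}, Y ∈ bigLevel G n → IsRetract X Y →
    X ∈ bigLevel G n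
  | 0, h, hr => isZero_of_isRetract h hr
  | 1, h, hr => bigOne_retract h hr
  | (_ + 2), h, hr => by
    obtain ⟨E, A, B, f, g, k, hT, hA, hB, hE⟩ := h
    exact ⟨E, A, B, f, g, k, hT, hA, hB, hr.trans hE⟩

lemma bigLevel_ext_one_right {G A E B : C} {n : ℕ} {f : A ⟶ E} {g : E ⟶ B} {h : B ⟶ A⟦(1 : ℤ)⟧}
    (hT : Triangle.mk f g h ∈ distTriang C) (hA : A ∈ bigLevel G (n + 1)) (hB : B ∈ bigOne G) :
    E ∈ bigLevel G (n + 2) :=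
  ⟨E, A, B, f, g, h, hT, hA, hB, .refl E⟩

/-! ### Ghosts -/

/-- A `G`-ghost: a map `φ` such that every composite `G⟦m⟧ ⟶ X ⟶ Y` with `φ` vanishes. -/
def Ghost (G : C) {X Y : C} (φ : X ⟶ Y) : Prop :=
  ∀ (m : ℤ) (g : (G⟦m⟧ : C) ⟶ X), g ≫ φ = 0

/-- `GhostPow G n φ` says that `φ` is a composite of `n` ghosts followed by an arbitrary map;
for `n = 0` this is no condition. -/
def GhostPow (G : C) : ℕ → ∀ {X Y : C}, (X ⟶ Y) → Prop
  | 0, _, _, _ => True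
  | (n + 1), X, Y, φ => ∃ (Z : C) (a : X ⟶ Z) (b : Z ⟶ Y), Ghost G a ∧ GhostPow G n b ∧ φ = a ≫ b

/-- `X` is `n`-ghost-free: every composite of `n` ghosts starting at `X` vanishes. -/
def NoGhost (G : C) (n : ℕ) (X : C) : Prop :=
  ∀ ⦃Y : C⦄ (φ : X ⟶ Y), GhostPow G n φ → φ = 0

variable {G : C}

lemma Ghost.precomp {W X Y : C} {φ : X ⟶ Y} (h : Ghost G φ) (w : W ⟶ X) : Ghost G (w ≫ φ) :=
  fun m g => by rw [← Category.assoc]; exact h m _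

lemma Ghost.shift {X Y : C} {φ : X ⟶ Y} (h : Ghost G φ) (k : ℤ) : Ghost G (φ⟦k⟧') := by
  intro m g
  let e := (shiftFunctorAdd' C (m - k) k m (by lia)).app G
  obtain ⟨g', hg'⟩ := (shiftFunctor C k).map_surjective (e.inv ≫ g)
  have : g = e.hom ≫ g'⟦k⟧' := by rw [hg', e.hom_inv_id_assoc]
  rw [this, Category.assoc, ← Functor.map_comp, h, Functor.map_zero, comp_zero]

lemma GhostPow.precomp : ∀ {n : ℕ} {W X Y : C} {φ : X ⟶ Y}, GhostPow G n φ →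
    ∀ (w : W ⟶ X), GhostPow G n (w ≫ φ)
  | 0, _, _, _, _, _, _ => trivial
  | (_ + 1), _, _, _, _, ⟨Z, a, b, ha, hb, h⟩, w =>
    ⟨Z, w ≫ a, b, ha.precomp w, hb, by rw [h, Category.assoc]⟩

lemma GhostPow.shift : ∀ {n : ℕ} {X Y : C} {φ : X ⟶ Y}, GhostPow G n φ →
    ∀ (k : ℤ), GhostPow G n (φ⟦k⟧')
  | 0, _, _, _, _, _ => trivial
  | (_ + 1), _, _, _, ⟨Z, a, b, ha, hb, h⟩, k =>
    ⟨Z⟦k⟧, a⟦k⟧', b⟦k⟧', ha.shift k, hb.shift k, by rw [h, Functor.map_comp]⟩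

lemma GhostPow.split (b : ℕ) : ∀ {a : ℕ} {X Y : C} {φ : X ⟶ Y}, GhostPow G (a + b) φ →
    ∃ (Z : C) (u : X ⟶ Z) (w : Z ⟶ Y), GhostPow G a u ∧ GhostPow G b w ∧ φ = u ≫ w
  | 0, X, _, φ, h => ⟨X, 𝟙 X, φ, trivial, by simpa using h, by simp⟩
  | (a + 1), _, _, φ, h => by
    rw [Nat.add_right_comm] at h
    obtain ⟨Z, p, q, hp, hq, rfl⟩ := h
    obtain ⟨Z', u, w, hu, hw, rfl⟩ := GhostPow.split b hq
    exact ⟨Z', p ≫ u, w, ⟨Z, p, u, hp, hu, rfl⟩, hw, by simp⟩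

/-! ### Closure properties of ghost-free objects -/

lemma noGhost_zero {X : C} : NoGhost G 0 X ↔ IsZero X :=
  ⟨fun h => (IsZero.iff_id_eq_zero X).2 (h _ trivial), fun h _ _ _ => h.eq_of_src _ _⟩

lemma NoGhost.retract {n : ℕ} {X Y : C} (h : NoGhost G n Y) (hr : IsRetract X Y) :
    NoGhost G n X := by
  obtain ⟨i, p, hip⟩ := hr
  intro Z φ hφ
  rw [← Category.id_comp φ, ← hip, Category.assoc, h _ (hφ.precomp p), comp_zero]

lemma NoGhost.shift {n : ℕ} {X : C} (h : NoGhost G n X) (k : ℤ) : NoGhost G n (X⟦k⟧ : C) := by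
  intro Y φ hφ
  have h1 := h _ ((hφ.shift (-k)).precomp (shiftShiftNeg X k).inv)
  rw [Preadditive.IsIso.comp_left_eq_zero] at h1
  exact (shiftFunctor C (-k)).map_injective (by rw [h1, Functor.map_zero])

lemma NoGhost.coprod {n : ℕ} {ι : Type v} (f : ι → C) [HasCoproduct f]
    (h : ∀ i, NoGhost G n (f i)) : NoGhost G n (∐ f) := by
  intro Y φ hφ
  refine Limits.Sigma.hom_ext _ _ fun i => ?_
  rw [h i _ (hφ.precomp _), comp_zero]

/-- The property of being `n`-ghost-free passes from `H` to all of `⟨H⟩̄₁`. -/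
lemma NoGhost.of_bigOne {n : ℕ} {H X : C} (hH : NoGhost G n H) (hX : X ∈ bigOne H) :
    NoGhost G n X :=
  hX {X | NoGhost G n X} ⟨hH, fun _ hX k => NoGhost.shift hX k,
    fun _ f _ hf => NoGhost.coprod f hf, fun _ _ hY hr => NoGhost.retract hY hr⟩

lemma noGhost_one_self : NoGhost G 1 G := by
  rintro Y φ ⟨Z, a, b, ha, -, rfl⟩
  have h1 := ha 0 ((shiftFunctorZero C ℤ).hom.app G)
  rw [Preadditive.IsIso.comp_left_eq_zero] at h1
  rw [h1, zero_comp]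

lemma Ghost.comp_eq_zero {P X Y : C} {φ : X ⟶ Y} (h : Ghost G φ) (hP : P ∈ bigOne G)
    (g : P ⟶ X) : g ≫ φ = 0 :=
  noGhost_one_self.of_bigOne hP _ ⟨Y, g ≫ φ, 𝟙 Y, h.precomp g, trivial, by simp⟩

lemma NoGhost.ext {a b : ℕ} {A E B : C} {f : A ⟶ E} {g : E ⟶ B} {h : B ⟶ A⟦(1 : ℤ)⟧}
    (hT : Triangle.mk f g h ∈ distTriang C) (hA : NoGhost G a A) (hB : NoGhost G b B) :
    NoGhost G (a + b) E := by
  intro Y φ hφ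
  obtain ⟨Z, u, w, hu, hw, rfl⟩ := hφ.split b
  obtain ⟨t, rfl⟩ : ∃ t : B ⟶ Z, u = g ≫ t :=
    Triangle.yoneda_exact₂ _ hT u (hA _ (hu.precomp f))
  rw [Category.assoc, hB _ (hw.precomp t), comp_zero]

/-- The ghost lemma, in the generality needed for transitivity: if `H` is `l`-ghost-free with
respect to `G`, then the objects of `⟨H⟩̄ₙ` are `ln`-ghost-free. -/
lemma NoGhost.of_bigLevel {H : C} {l : ℕ} (hH : NoGhost G l H) :
    ∀ {n : ℕ} {X : C}, X ∈ bigLevel H n → NoGhost G (l * n) X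
  | 0, _, hX => noGhost_zero.2 hX
  | 1, _, hX => by simpa using hH.of_bigOne hX
  | (n + 2), _, hX => by
    obtain ⟨E, A, B, f, g, k, hT, hA, hB, hE⟩ := hX
    exact ((NoGhost.of_bigLevel hH hA).ext hT (hH.of_bigOne hB)).retract hE

lemma noGhost_of_mem {n : ℕ} {X : C} (hX : X ∈ bigLevel G n) : NoGhost G n X := by
  simpa using noGhost_one_self.of_bigLevel hX

/-! ### Ghost-free objects lie in `⟨G⟩̄ₙ` -/

/-- In an extension of `X` by `P`, replacing `X` by an object `E` of which it is a summand
(and pulling back the extension) replaces the middle term by one of which it is a summand. -/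
lemma exists_retract_ext {P W X E : C} {f : P ⟶ W} {g : W ⟶ X} {h : X ⟶ P⟦(1 : ℤ)⟧}
    (hT : Triangle.mk f g h ∈ distTriang C) (hr : IsRetract X E) :
    ∃ (W' : C) (f' : P ⟶ W') (g' : W' ⟶ E) (h' : E ⟶ P⟦(1 : ℤ)⟧),
      Triangle.mk f' g' h' ∈ distTriang C ∧ IsRetract W W' := by
  obtain ⟨i, p, hip⟩ := hr
  obtain ⟨W', f', g', hT'⟩ := distinguished_cocone_triangle₂ (p ≫ h)
  refine ⟨W', f', g', _, hT', ?_⟩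
  obtain ⟨j, hj₁, hj₂⟩ : ∃ j : W ⟶ W', f ≫ j = 𝟙 P ≫ f' ∧ g ≫ i = j ≫ g' :=
    complete_distinguished_triangle_morphism₂ _ _ hT hT' (𝟙 P) i
      (by
        change h ≫ (𝟙 P)⟦(1 : ℤ)⟧' = i ≫ p ≫ h
        rw [CategoryTheory.Functor.map_id, Category.comp_id, reassoc_of% hip])
  obtain ⟨q, hq₁, hq₂⟩ : ∃ q : W' ⟶ W, f' ≫ q = 𝟙 P ≫ f ∧ g' ≫ p = q ≫ g :=
    complete_distinguished_triangle_morphism₂ _ _ hT' hT (𝟙 P) p (by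
      change (p ≫ h) ≫ (𝟙 P)⟦(1 : ℤ)⟧' = p ≫ h
      rw [CategoryTheory.Functor.map_id, Category.comp_id])
  let φ : Triangle.mk f g h ⟶ Triangle.mk f g h :=
    { hom₁ := 𝟙 P
      hom₂ := j ≫ q
      hom₃ := 𝟙 X
      comm₁ := by
        change f ≫ j ≫ q = 𝟙 P ≫ f
        rw [reassoc_of% hj₁, hq₁, Category.id_comp]
      comm₂ := by
        change g ≫ 𝟙 X = (j ≫ q) ≫ g
        rw [Category.assoc, ← hq₂, ← reassoc_of% hj₂, hip]
      comm₃ := by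
        change h ≫ (𝟙 P)⟦(1 : ℤ)⟧' = 𝟙 X ≫ h
        rw [CategoryTheory.Functor.map_id, Category.comp_id, Category.id_comp] }
  have hiso : IsIso (j ≫ q) :=
    isIso₂_of_isIso₁₃ φ hT hT (IsIso.id P) (IsIso.id X)
  exact ⟨j, q ≫ inv (j ≫ q), by rw [← Category.assoc, IsIso.hom_inv_id]⟩

/-- Given `E` an extension of `X` by `P ∈ ⟨G⟩̄₁` and `X` an extension of `Q ∈ ⟨G⟩̄₁` by an
`n`-ghost-free `A`, the fibre `V` of `E ⟶ X ⟶ Q` is `(n + 1)`-ghost-free. With the octahedral axiom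
`V` would be an extension of `A` by `P`; without it, one uses that a ghost out of `V` kills both
`P` and `Q⟦-1⟧`. -/
lemma noGhost_fibre {n : ℕ} {P E X A Q V : C} {f : P ⟶ E} {g : E ⟶ X} {h : X ⟶ P⟦(1 : ℤ)⟧}
    (hT : Triangle.mk f g h ∈ distTriang C) (hP : P ∈ bigOne G)
    {a : A ⟶ X} {b : X ⟶ Q} {c : Q ⟶ A⟦(1 : ℤ)⟧}
    (hT₁ : Triangle.mk a b c ∈ distTriang C) (hA : NoGhost G n A) (hQ : Q ∈ bigOne G)
    {i : V ⟶ E} {d : Q ⟶ V⟦(1 : ℤ)⟧} (hT₂ : Triangle.mk i (g ≫ b) d ∈ distTriang C) :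
    NoGhost G (n + 1) V := by
  rintro Y φ ⟨Z, u, w, hu, hw, rfl⟩
  -- `u` kills `Q⟦-1⟧ ⟶ V`, hence extends to `E`.
  obtain ⟨t, rfl⟩ : ∃ t : E ⟶ Z, u = i ≫ t :=
    Triangle.yoneda_exact₂ _ (inv_rot_of_distTriang _ hT₂) u
      (hu.comp_eq_zero (bigOne_shift hQ (-1)) _)
  have hfg : f ≫ g = 0 := comp_distTriang_mor_zero₁₂ _ hT
  -- `P ⟶ E` lifts to `V`, so the extension kills it and hence factors through `X`.
  obtain ⟨s, hs⟩ : ∃ s : P ⟶ V, f = s ≫ i :=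
    Triangle.coyoneda_exact₂ _ hT₂ f
      (by change f ≫ g ≫ b = 0; rw [reassoc_of% hfg, zero_comp])
  obtain ⟨r, rfl⟩ : ∃ r : X ⟶ Z, t = g ≫ r :=
    Triangle.yoneda_exact₂ _ hT t (by
      change f ≫ t = 0
      rw [hs, Category.assoc, hu.comp_eq_zero hP s])
  -- `V ⟶ X` lands in `A`, which is `n`-ghost-free.
  have hig : i ≫ g ≫ b = 0 := comp_distTriang_mor_zero₁₂ _ hT₂
  obtain ⟨q, hq⟩ : ∃ q : V ⟶ A, i ≫ g = q ≫ a :=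
    Triangle.coyoneda_exact₂ _ hT₁ (i ≫ g) (by
      change (i ≫ g) ≫ b = 0
      rw [Category.assoc, hig])
  have hz : a ≫ r ≫ w = 0 := hA _ ((hw.precomp r).precomp a)
  rw [Category.assoc, Category.assoc, reassoc_of% hq, hz, comp_zero]

/-- Extensions of `⟨G⟩̄ₙ₊₁` by `⟨G⟩̄₁` lie in `⟨G⟩̄ₙ₊₂`, provided that `(n + 1)`-ghost-free objects
are known to lie in `⟨G⟩̄ₙ₊₁`. The definition of `bigLevel` provides the other order of extensions. -/
lemma bigLevel_ext_one_left {n : ℕ} (ih : ∀ V : C, NoGhost G (n + 1) V → V ∈ bigLevel G (n + 1))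
    {P W X : C} {f : P ⟶ W} {g : W ⟶ X} {h : X ⟶ P⟦(1 : ℤ)⟧}
    (hT : Triangle.mk f g h ∈ distTriang C) (hP : P ∈ bigOne G)
    (hX : X ∈ bigLevel G (n + 1)) : W ∈ bigLevel G (n + 2) := by
  obtain _ | n := n
  · exact bigLevel_ext_one_right hT hP hX
  · obtain ⟨E, A, Q, a, b, c, hT₁, hA, hQ, hr⟩ := hX
    obtain ⟨W', f', g', h', hT', hr'⟩ := exists_retract_ext hT hr
    obtain ⟨V, i, d, hT₂⟩ := distinguished_cocone_triangle₁ (g' ≫ b)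
    have hV : NoGhost G (n + 1 + 1) V := noGhost_fibre hT' hP hT₁ (noGhost_of_mem hA) hQ hT₂
    exact bigLevel_retract (bigLevel_ext_one_right hT₂ (ih V hV) hQ) hr'

/-- The universal ghost out of `X`: the cone of the evaluation map from the coproduct of all
`G⟦m⟧`, indexed by all maps `G⟦m⟧ ⟶ X`. -/
lemma exists_universal_ghost [HasCoproducts.{v} C] (G X : C) :
    ∃ (P X₁ : C) (f : P ⟶ X) (g : X ⟶ X₁) (h : X₁ ⟶ P⟦(1 : ℤ)⟧),
      Triangle.mk f g h ∈ distTriang C ∧ P ∈ bigOne G ∧ Ghost G g := by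
  let F : (Σ m : ℤ, ((G⟦m⟧ : C) ⟶ X)) → C := fun x => G⟦x.1⟧
  obtain ⟨X₁, g, h, hT⟩ := distinguished_cocone_triangle (Sigma.desc (f := F) fun x => x.2)
  refine ⟨_, X₁, _, g, h, hT, bigOne_coprod _ fun x => bigOne_shift (bigOne_self G) _, ?_⟩
  intro m φ
  have hφ : φ = Sigma.ι F ⟨m, φ⟩ ≫ Sigma.desc (f := F) fun x => x.2 := by simp
  have hz : (Sigma.desc (f := F) fun x => x.2) ≫ g = 0 := comp_distTriang_mor_zero₁₂ _ hT
  rw [hφ, Category.assoc, hz, comp_zero]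

/-- An `n`-cellular approximation of `X` yields that `n`-ghost-free objects are in `⟨G⟩̄ₙ`:
the composite ghost `γ` then vanishes, so the identity of `X` factors through `α`. -/
lemma mem_of_approx {n : ℕ} {X W Y : C} (hW : W ∈ bigLevel G n) (α : W ⟶ X) (γ : X ⟶ Y)
    (hγ : GhostPow G n γ)
    (hex : ∀ ⦃Z : C⦄ (t : Z ⟶ X), t ≫ γ = 0 → ∃ s : Z ⟶ W, t = s ≫ α)
    (hX : NoGhost G n X) : X ∈ bigLevel G n := by
  obtain ⟨s, hs⟩ := hex (𝟙 X) (by rw [hX γ hγ, comp_zero])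
  exact bigLevel_retract hW ⟨s, α, hs.symm⟩

/-- Cellular approximation: there are `α : W ⟶ X` with `W ∈ ⟨G⟩̄ₙ` and an `n`-fold composite of
ghosts `γ : X ⟶ Y` such that all maps killed by `γ` factor through `α`. -/
lemma exists_approx [HasCoproducts.{v} C] (G : C) : ∀ (n : ℕ) (X : C),
    ∃ (W Y : C) (α : W ⟶ X) (γ : X ⟶ Y), W ∈ bigLevel G n ∧ GhostPow G n γ ∧
      ∀ ⦃Z : C⦄ (t : Z ⟶ X), t ≫ γ = 0 → ∃ s : Z ⟶ W, t = s ≫ α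
  | 0, X => by
    obtain ⟨O, hO⟩ := HasZeroObject.zero (C := C)
    refine ⟨O, X, 0, 𝟙 X, hO, trivial, fun Z t ht => ⟨0, ?_⟩⟩
    simpa using ht
  | 1, X => by
    obtain ⟨P, X₁, f, g, h, hT, hP, hg⟩ := exists_universal_ghost G X
    exact ⟨P, X₁, f, g, hP, ⟨X₁, g, 𝟙 _, hg, trivial, by simp⟩,
      fun Z t ht => Triangle.coyoneda_exact₂ _ hT t ht⟩
  | (n + 2), X => by
    obtain ⟨P, X₁, f, g, h, hT, hP, hg⟩ := exists_universal_ghost G X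
    obtain ⟨W₁, Y, α₁, γ₁, hW₁, hγ₁, hex₁⟩ := exists_approx G (n + 1) X₁
    -- `W` is the pullback of the extension `P ⟶ X ⟶ X₁` along `α₁ : W₁ ⟶ X₁`.
    obtain ⟨W, j, p, hTW⟩ := distinguished_cocone_triangle₂ (α₁ ≫ h)
    obtain ⟨α, hα₁, hα₂⟩ : ∃ α : W ⟶ X, j ≫ α = 𝟙 P ≫ f ∧ p ≫ α₁ = α ≫ g :=
      complete_distinguished_triangle_morphism₂ _ _ hTW hT (𝟙 P) α₁ (by
        change (α₁ ≫ h) ≫ (𝟙 P)⟦(1 : ℤ)⟧' = α₁ ≫ h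
        rw [CategoryTheory.Functor.map_id, Category.comp_id])
    have hW : W ∈ bigLevel G (n + 2) := by
      refine bigLevel_ext_one_left (fun V hV => ?_) hTW hP hW₁
      obtain ⟨_, _, α', γ', hW', hγ', hex'⟩ := exists_approx G (n + 1) V
      exact mem_of_approx hW' α' γ' hγ' hex' hV
    refine ⟨W, Y, α, g ≫ γ₁, hW, ⟨X₁, g, γ₁, hg, hγ₁, rfl⟩, fun Z t ht => ?_⟩
    obtain ⟨s₁, hs₁⟩ := hex₁ (t ≫ g) (by rw [Category.assoc, ht])
    have hgh : g ≫ h = 0 := comp_distTriang_mor_zero₂₃ _ hT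
    obtain ⟨s, hs⟩ : ∃ s : Z ⟶ W, s₁ = s ≫ p :=
      Triangle.coyoneda_exact₃ _ hTW s₁ (by
        change s₁ ≫ α₁ ≫ h = 0
        rw [← reassoc_of% hs₁, hgh, comp_zero])
    -- `s ≫ α` and `t` agree after `g`, so they differ by a map through `P`, which `j` corrects.
    obtain ⟨r, hr⟩ : ∃ r : Z ⟶ P, t - s ≫ α = r ≫ f :=
      Triangle.coyoneda_exact₂ _ hT (t - s ≫ α) (by
        change (t - s ≫ α) ≫ g = 0
        rw [Preadditive.sub_comp, Category.assoc, ← hα₂, hs₁, hs, Category.assoc, sub_self])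
    refine ⟨s + r ≫ j, ?_⟩
    rw [Preadditive.add_comp, Category.assoc, hα₁, Category.id_comp, ← hr, add_sub_cancel]

lemma mem_bigLevel_iff_noGhost [HasCoproducts.{v} C] {n : ℕ} {X : C} :
    X ∈ bigLevel G n ↔ NoGhost G n X := by
  refine ⟨noGhost_of_mem, fun hX => ?_⟩
  obtain ⟨_, _, α, γ, hW, hγ, hex⟩ := exists_approx G n X
  exact mem_of_approx hW α γ hγ hex hX

lemma bigLevel_trans [HasCoproducts.{v} C] {H X : C} {l n : ℕ} (hH : H ∈ bigLevel G l)
    (hX : X ∈ bigLevel H n) : X ∈ bigLevel G (l * n) :=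
  mem_bigLevel_iff_noGhost.2 ((noGhost_of_mem hH).of_bigLevel hX)

end Levels

/-! ### Exact functors -/

section Functor

set_option linter.unusedSectionVars false

variable [HasZeroObject C] [Preadditive C] [HasShift C ℤ]
  [∀ n : ℤ, (shiftFunctor C n).Additive] [Pretriangulated C]
  {D : Type u₂} [Category.{v} D] [HasZeroObject D] [Preadditive D] [HasShift D ℤ]
  [∀ n : ℤ, (shiftFunctor D n).Additive] [Pretriangulated D] [HasCoproducts.{v} D]
  (Φ : C ⥤ D) [Φ.CommShift ℤ] [Φ.IsTriangulated]
  [∀ J : Type v, PreservesColimitsOfShape (Discrete J) Φ]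

lemma bigOne_map {G X : C} (hX : X ∈ bigOne G) : Φ.obj X ∈ bigOne (Φ.obj G) :=
  hX {X | Φ.obj X ∈ bigOne (Φ.obj G)} ⟨bigOne_self _,
    fun X hX k => bigOne_retract (bigOne_shift hX k) (.of_iso ((Φ.commShiftIso k).app X)),
    fun _ f _ hf => bigOne_retract (bigOne_coprod (fun i => Φ.obj (f i)) hf)
      (.of_iso (PreservesCoproduct.iso Φ f)),
    fun _ _ hY hr => bigOne_retract hY (hr.map Φ)⟩

lemma bigLevel_map {G : C} : ∀ {n : ℕ} {X : C}, X ∈ bigLevel G n →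
    Φ.obj X ∈ bigLevel (Φ.obj G) n
  | 0, _, hX => Φ.map_isZero hX
  | 1, _, hX => bigOne_map Φ hX
  | (n + 2), _, hX => by
    obtain ⟨E, A, B, f, g, k, hT, hA, hB, hE⟩ := hX
    exact bigLevel_retract (bigLevel_ext_one_right (Φ.map_distinguished _ hT) (bigLevel_map hA)
      (bigOne_map Φ hB)) (hE.map Φ)

end Functor


section Adjunction

/- The tensor-triangulated adjunction setting: `S` (𝒮) and `T` (𝒯) are triangulated
categories admitting all small coproducts, each equipped with a symmetric monoidal
structure whose tensoring endofunctors are exact and preserve small coproducts;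
`F : S ⥤ T` (the functor `f^*`) is an exact strong monoidal functor preserving small
coproducts, with a right adjoint `Fst : T ⥤ S` (the functor `f_*`) which is exact and
preserves small coproducts, satisfying the projection formula
`A ⊗ f_*(B) ≅ f_*(B ⊗ f^*A)`. -/

variable {S : Type u} [Category.{v} S] {T : Type u₂} [Category.{v} T]
  [HasZeroObject S] [Preadditive S] [HasShift S ℤ]
  [∀ n : ℤ, (shiftFunctor S n).Additive] [Pretriangulated S] [HasCoproducts.{v} S]
  [HasZeroObject T] [Preadditive T] [HasShift T ℤ]
  [∀ n : ℤ, (shiftFunctor T n).Additive] [Pretriangulated T] [HasCoproducts.{v} T]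
  [MonoidalCategory S] [SymmetricCategory S] [MonoidalCategory T] [SymmetricCategory T]
  [∀ X : S, (tensorRight X).CommShift ℤ] [∀ X : S, (tensorRight X).IsTriangulated]
  [∀ (X : S) (J : Type v), PreservesColimitsOfShape (Discrete J) (tensorRight X)]
  [∀ X : T, (tensorRight X).CommShift ℤ] [∀ X : T, (tensorRight X).IsTriangulated]
  [∀ (X : T) (J : Type v), PreservesColimitsOfShape (Discrete J) (tensorRight X)]
  (F : S ⥤ T) [F.Monoidal] [F.CommShift ℤ] [F.IsTriangulated]
  [∀ J : Type v, PreservesColimitsOfShape (Discrete J) F]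
  (Fst : T ⥤ S) [Fst.CommShift ℤ] [Fst.IsTriangulated]
  [∀ J : Type v, PreservesColimitsOfShape (Discrete J) Fst]

/--
in the tensor-triangulated adjunction setting, if `⟨G⟩̄ₗ = 𝒯` and
`1_𝒮 ∈ ⟨f_* G⟩̄ₙ`, then `⟨f_* G⟩̄_{ln} = 𝒮`; in particular `f_* G` is a strong
⊕-generator for 𝒮.
-/
theorem statement6 (adj : F ⊣ Fst)
    (proj : ∀ (A : S) (B : T), Nonempty ((A ⊗ Fst.obj B) ≅ Fst.obj (B ⊗ F.obj A)))
    (G : T) (l n : ℕ) (hl : bigLevel G l = (Set.univ : Set T))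
    (hn : (𝟙_ S) ∈ bigLevel (Fst.obj G) n) :
    bigLevel (Fst.obj G) (l * n) = (Set.univ : Set S) ∧
      ∃ m : ℕ, bigLevel (Fst.obj G) m = (Set.univ : Set S) := by
  have key : bigLevel (Fst.obj G) (l * n) = (Set.univ : Set S) := by
    refine Set.eq_univ_of_forall fun X => ?_
    have hX : X ∈ bigLevel (Fst.obj G ⊗ X) n :=
      bigLevel_retract (bigLevel_map (tensorRight X) hn) (.of_iso (λ_ X).symm)
    obtain ⟨e⟩ := proj X G
    have hGX : G ⊗ F.obj X ∈ bigLevel G l := hl ▸ Set.mem_univ _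
    have hH : Fst.obj G ⊗ X ∈ bigLevel (Fst.obj G) l :=
      bigLevel_retract (bigLevel_map Fst hGX) (.of_iso (β_ (Fst.obj G) X ≪≫ e))
    exact bigLevel_trans hH hX
  exact ⟨key, _, key⟩

end Adjunction

end Stmt
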